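/- For every s₀ ∈ ℕ there exists a constant C > 0, depending only on s₀, such that for every interval (a,b) with Δt = b − a, every r ∈ ℕ with r ≥ 1, every function u : [a,b] → ℝ of class C^{s₀+1}, and every integer s with 0 ≤ s ≤ min(r, s₀), the projection error satisfies ‖u − Π^r u‖²_{L²(a,b)} ≤ C (Δt/2)^{2(s+1)} (1/r²) ((r−s)!/(r+s)!) ‖u^{(s+1)}‖²_{L²(a,b)}, where u^{(s+1)} is the (s+1)-st derivative of u. -/

import Mathlib

open MeasureTheory Set intervalIntegral

/-!
On `(-1, 1)` the Gegenbauer polynomials of weight `(1 - t²)ᵏ` diagonalise differentiation, so an `f`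
orthogonal to degrees below `m` satisfies the spectral gap inequality
`m (m + 2k + 1) ∫ (1 - t²)ᵏ f² ≤ ∫ (1 - t²)ᵏ⁺¹ f'²`, and `f'` is orthogonal to degrees below `m - 1`
for the next weight. Iterating from `k = 0`, the product of the gaps is `(r + s)! / (r - s)!`: this
bounds the error of the unweighted projection of `u'` onto degrees below `r`.

For `p = Π^r u` the first gap bounds `r (r + 1) ∫ (u - p)²` by `∫ (t - a) (b - t) (u' - p')²`.
Because `u - p` vanishes at `b`, an integration by parts shows that `p'` is the best approximation
of `u'` by degrees below `r` for the weight `t - a`. Once `b - t` has been bounded by `b - a`, the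
unweighted projection of `u'` may therefore replace `p'`, at the price of another factor `b - a`.

The gap is an equality for a polynomial of degree `n` orthogonal to all lower degrees, since the
Gegenbauer operator maps it to `-n (n + 2k + 1)` times itself plus terms of lower degree. Orthogonal
sums of these give all polynomials, and the Weierstrass theorem all `C¹` functions.
-/

namespace RadauProjection

open Polynomial

variable {a b : ℝ} {f f' w : ℝ → ℝ} {k m n r s : ℕ}

/-- Orthogonality of `f` to all polynomials of degree `< n` in `L²((a, b), w dt)`. A polynomial `g`
of degree `< n` is the orthogonal projection of `f` exactly when `f - g` has this property; this is
how projections are expressed below. -/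
def OrthogonalToDegreeLT (a b : ℝ) (w : ℝ → ℝ) (n : ℕ) (f : ℝ → ℝ) : Prop :=
  ∀ q : ℝ[X], q.degree < n → ∫ t in a..b, w t * (f t * q.eval t) = 0

lemma OrthogonalToDegreeLT.mono (h : OrthogonalToDegreeLT a b w n f) (hmn : m ≤ n) :
    OrthogonalToDegreeLT a b w m f :=
  fun q hq => h q (hq.trans_le (by exact_mod_cast hmn))

lemma OrthogonalToDegreeLT.sub {g : ℝ → ℝ} (hab : a ≤ b) (hw : ContinuousOn w (Icc a b))
    (hf : ContinuousOn f (Icc a b)) (hg : ContinuousOn g (Icc a b))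
    (hfo : OrthogonalToDegreeLT a b w n f) (hgo : OrthogonalToDegreeLT a b w n g) :
    OrthogonalToDegreeLT a b w n (fun t => f t - g t) := by
  intro q hq
  have hint : ∀ {h : ℝ → ℝ}, ContinuousOn h (Icc a b) →
      IntervalIntegrable (fun t => w t * (h t * q.eval t)) volume a b := fun hh =>
    ContinuousOn.intervalIntegrable_of_Icc hab (by fun_prop)
  simp only [sub_mul, mul_sub]
  rw [intervalIntegral.integral_sub (hint hf) (hint hg), hfo q hq, hgo q hq, sub_zero]

lemma integral_weight_mul_sq_nonneg (hab : a ≤ b) (hw : ∀ t ∈ Icc a b, 0 ≤ w t) :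
    0 ≤ ∫ t in a..b, w t * f t ^ 2 :=
  integral_nonneg hab fun t ht => mul_nonneg (hw t ht) (sq_nonneg _)

lemma integral_sq_eq_integral_sq_add_integral_sub_sq {g : ℝ[X]} (hab : a ≤ b)
    (hw : ContinuousOn w (Icc a b)) (hf : ContinuousOn f (Icc a b)) (hg : g.degree < n)
    (ho : OrthogonalToDegreeLT a b w n fun t => f t - g.eval t) :
    ∫ t in a..b, w t * f t ^ 2
      = (∫ t in a..b, w t * g.eval t ^ 2) + ∫ t in a..b, w t * (f t - g.eval t) ^ 2 := by
  have hcross : ∫ t in a..b, 2 * (w t * ((f t - g.eval t) * g.eval t)) = 0 := by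
    rw [intervalIntegral.integral_const_mul, ho g hg, mul_zero]
  rw [← add_zero (_ + _), ← hcross, ← intervalIntegral.integral_add,
    ← intervalIntegral.integral_add]
  · exact integral_congr fun t _ => by ring
  all_goals exact ContinuousOn.intervalIntegrable_of_Icc hab (by fun_prop)

lemma integral_sub_sq_le_of_orthogonal {g q : ℝ[X]} (hab : a ≤ b) (hw : ContinuousOn w (Icc a b))
    (hw₀ : ∀ t ∈ Icc a b, 0 ≤ w t) (hf : ContinuousOn f (Icc a b)) (hg : g.degree < n)
    (ho : OrthogonalToDegreeLT a b w n fun t => f t - g.eval t) (hq : q.degree < n) :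
    ∫ t in a..b, w t * (f t - g.eval t) ^ 2 ≤ ∫ t in a..b, w t * (f t - q.eval t) ^ 2 := by
  have hpyth := integral_sq_eq_integral_sq_add_integral_sub_sq (f := fun t => f t - q.eval t)
    (g := g - q) hab hw (by fun_prop) ((degree_sub_le g q).trans_lt (max_lt hg hq))
    (by simpa using ho)
  simp only [eval_sub, sub_sub_sub_cancel_right] at hpyth
  have hnonneg := integral_weight_mul_sq_nonneg (f := fun t => g.eval t - q.eval t) hab hw₀
  linarith

lemma integral_weight_mul_eval_sq_pos {q : ℝ[X]} (hab : a < b) (hw : ContinuousOn w (Icc a b))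
    (hw₀ : ∀ t ∈ Ioo a b, 0 < w t) (hq : q ≠ 0) : 0 < ∫ t in a..b, w t * q.eval t ^ 2 := by
  obtain ⟨c, hc, hqc⟩ : ∃ c ∈ Ioo a b, q.eval c ≠ 0 := by
    by_contra! hroots
    exact hq (eq_zero_of_infinite_isRoot q ((Ioo_infinite hab).mono hroots))
  have hw' : ∀ t ∈ Icc a b, 0 ≤ w t := by
    rw [← closure_Ioo hab.ne] at hw ⊢
    exact fun t ht => le_on_closure (fun s hs => (hw₀ s hs).le) continuousOn_const hw ht
  exact integral_pos hab (by fun_prop)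
    (fun t ht => mul_nonneg (hw' t (Ioc_subset_Icc_self ht)) (sq_nonneg _))
    ⟨c, Ioo_subset_Icc_self hc, mul_pos (hw₀ c hc) (by positivity)⟩

/-- The linear functional `q ↦ ∫ φ q` on polynomials. -/
noncomputable def momentFunctional {φ : ℝ → ℝ} (hφ : IntervalIntegrable φ volume a b) :
    ℝ[X] →ₗ[ℝ] ℝ where
  toFun q := ∫ t in a..b, φ t * q.eval t
  map_add' p q := by
    simp only [eval_add, mul_add]
    exact intervalIntegral.integral_add (hφ.mul_continuousOn p.continuousOn)
      (hφ.mul_continuousOn q.continuousOn)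
  map_smul' c q := by
    simp only [eval_smul, smul_eq_mul, mul_left_comm _ c, RingHom.id_apply,
      intervalIntegral.integral_const_mul]

lemma exists_sub_orthogonalToDegreeLT (hab : a < b) (hw : ContinuousOn w (Icc a b))
    (hw₀ : ∀ t ∈ Ioo a b, 0 < w t) (hf : ContinuousOn f (Icc a b)) (n : ℕ) :
    ∃ g : ℝ[X], g.degree < n ∧ OrthogonalToDegreeLT a b w n fun t => f t - g.eval t := by
  have hwi := hw.intervalIntegrable_of_Icc (μ := volume) hab.le
  have hwfi := (hw.mul hf).intervalIntegrable_of_Icc (μ := volume) hab.le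
  let V := degreeLT ℝ n
  have : FiniteDimensional ℝ V := Module.Finite.equiv (degreeLTEquiv ℝ n).symm
  let pairing : V →ₗ[ℝ] Module.Dual ℝ V :=
    ((LinearMap.mul ℝ ℝ[X]).compr₂ (momentFunctional hwi)).domRestrict₁₂ V V
  have hinj : Function.Injective pairing := by
    refine (injective_iff_map_eq_zero pairing).2 fun p hp => ?_
    by_contra hp₀
    have hself : ∫ t in a..b, w t * ((p : ℝ[X]) * p).eval t = 0 := LinearMap.congr_fun hp p
    simp only [← pow_two, eval_pow] at hself
    exact (integral_weight_mul_eval_sq_pos hab hw hw₀ (by simpa using hp₀)).ne' hself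
  obtain ⟨g, hg⟩ := (LinearMap.injective_iff_surjective_of_finrank_eq_finrank
    Subspace.dual_finrank_eq.symm).1 hinj ((momentFunctional hwfi).domRestrict V)
  refine ⟨g, mem_degreeLT.1 g.2, fun q hq => ?_⟩
  have hgq : ∫ t in a..b, w t * ((g : ℝ[X]) * q).eval t = ∫ t in a..b, w t * f t * q.eval t :=
    LinearMap.congr_fun hg ⟨q, mem_degreeLT.2 hq⟩
  rw [← sub_eq_zero.2 hgq.symm, ← intervalIntegral.integral_sub]
  · exact integral_congr fun t _ => by simp only [eval_mul]; ring
  all_goals exact ContinuousOn.intervalIntegrable_of_Icc hab.le (by fun_prop)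

lemma exists_forall_integral_sub_sq_le (hab : a ≤ b) (hw : ContinuousOn w (Icc a b))
    (hw₀ : ∀ t ∈ Icc a b, 0 ≤ w t) (hf : ContinuousOn f (Icc a b)) {ε : ℝ} (hε : 0 < ε) :
    ∃ n₀ : ℕ, ∀ n ≥ n₀, ∀ g : ℝ[X], g.degree < n →
      OrthogonalToDegreeLT a b w n (fun t => f t - g.eval t) →
      ∫ t in a..b, w t * (f t - g.eval t) ^ 2 ≤ ε := by
  have hmass : 0 ≤ ∫ t in a..b, w t := integral_nonneg hab hw₀
  obtain ⟨δ, hδ, hδε⟩ : ∃ δ > 0, (∫ t in a..b, w t) * δ ^ 2 ≤ ε := by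
    refine ⟨√(ε / ((∫ t in a..b, w t) + 1)), by positivity, ?_⟩
    rw [Real.sq_sqrt (by positivity), mul_div_assoc', div_le_iff₀ (by positivity)]
    nlinarith
  obtain ⟨p, hp⟩ := exists_polynomial_near_of_continuousOn a b f hf δ hδ
  refine ⟨p.natDegree + 1, fun n hn g hg ho => ?_⟩
  have hpn : p.degree < n := degree_le_natDegree.trans_lt (by exact_mod_cast hn)
  calc ∫ t in a..b, w t * (f t - g.eval t) ^ 2
      ≤ ∫ t in a..b, w t * (f t - p.eval t) ^ 2 :=
        integral_sub_sq_le_of_orthogonal hab hw hw₀ hf hg ho hpn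
    _ ≤ ∫ t in a..b, w t * δ ^ 2 := by
        refine integral_mono_on hab ?_ ?_ fun t ht => ?_
        · exact ContinuousOn.intervalIntegrable_of_Icc hab (by fun_prop)
        · exact ContinuousOn.intervalIntegrable_of_Icc hab (by fun_prop)
        · have hclose : |f t - p.eval t| ≤ |δ| := by
            rw [abs_sub_comm, abs_of_pos hδ]
            exact (hp t ht).le
          exact mul_le_mul_of_nonneg_left (sq_le_sq.2 hclose) (hw₀ t ht)
    _ ≤ ε := by rwa [intervalIntegral.integral_mul_const]

lemma integral_deriv_mul_eval (hab : a ≤ b)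
    (hf : ∀ t ∈ Icc a b, HasDerivWithinAt f (f' t) (Icc a b) t) (hf' : ContinuousOn f' (Icc a b))
    (p : ℝ[X]) :
    ∫ t in a..b, f' t * p.eval t
      = f b * p.eval b - f a * p.eval a - ∫ t in a..b, f t * (derivative p).eval t := by
  rw [← uIcc_of_le hab] at hf hf'
  have hfc : ContinuousOn f (uIcc a b) := fun t ht => (hf t ht).continuousWithinAt
  rw [← integral_deriv_mul_eq_sub_of_hasDerivWithinAt hf
    (fun t _ => (p.hasDerivAt t).hasDerivWithinAt) hf'.intervalIntegrable
    (derivative p).continuous.continuousOn.intervalIntegrable, ← intervalIntegral.integral_sub]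
  · simp only [add_sub_cancel_right]
  all_goals exact ContinuousOn.intervalIntegrable (by fun_prop)

/-- The ultraspherical (Gegenbauer) weight on `(a, b)`. It generalizes `(1 - t²)ᵏ` on `(-1, 1)`. -/
def gegenbauerWeight (a b : ℝ) (k : ℕ) (t : ℝ) : ℝ := ((t - a) * (b - t)) ^ k

@[simp]
lemma gegenbauerWeight_zero {t : ℝ} : gegenbauerWeight a b 0 t = 1 := pow_zero _

@[fun_prop]
lemma continuous_gegenbauerWeight : Continuous (gegenbauerWeight a b k) := by
  unfold gegenbauerWeight
  fun_prop

lemma gegenbauerWeight_pos {t : ℝ} (ht : t ∈ Ioo a b) : 0 < gegenbauerWeight a b k t :=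
  pow_pos (mul_pos (sub_pos.2 ht.1) (sub_pos.2 ht.2)) k

lemma gegenbauerWeight_nonneg {t : ℝ} (ht : t ∈ Icc a b) : 0 ≤ gegenbauerWeight a b k t :=
  pow_nonneg (mul_nonneg (sub_nonneg.2 ht.1) (sub_nonneg.2 ht.2)) k

lemma gegenbauerWeight_le {t : ℝ} (ht : t ∈ Icc a b) :
    gegenbauerWeight a b k t ≤ ((b - a) / 2) ^ (2 * k) := by
  rw [gegenbauerWeight, pow_mul]
  refine pow_le_pow_left₀ (mul_nonneg (sub_nonneg.2 ht.1) (sub_nonneg.2 ht.2)) ?_ k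
  linarith [sq_nonneg (t - a - (b - t))]

/-- The raising operator of the ultraspherical polynomials, `q ↦ ω⁻¹ (ω (t - a) (b - t) q)'` for
the weight `ω = ((t - a) (b - t))ᵏ`, multiplied out so that no division occurs. Up to sign it is the
adjoint of `d/dt` between the spaces of weights `k` and `k + 1`. -/
noncomputable def gegenbauerRaise (a b : ℝ) (k : ℕ) (q : ℝ[X]) : ℝ[X] :=
  (X - C a) * (C b - X) * derivative q + C (k + 1 : ℝ) * (C a + C b - 2 * X) * q

lemma integral_deriv_mul_eq_neg_integral_mul_gegenbauerRaise (hab : a ≤ b)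
    (hf : ∀ t ∈ Icc a b, HasDerivWithinAt f (f' t) (Icc a b) t) (hf' : ContinuousOn f' (Icc a b))
    (q : ℝ[X]) :
    ∫ t in a..b, gegenbauerWeight a b (k + 1) t * (f' t * q.eval t)
      = -∫ t in a..b, gegenbauerWeight a b k t * (f t * (gegenbauerRaise a b k q).eval t) := by
  have hparts := integral_deriv_mul_eval hab hf hf' (((X - C a) * (C b - X)) ^ (k + 1) * q)
  have hderiv (t : ℝ) : (derivative (((X - C a) * (C b - X)) ^ (k + 1) * q)).eval t
      = gegenbauerWeight a b k t * (gegenbauerRaise a b k q).eval t := by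
    simp only [gegenbauerWeight, gegenbauerRaise, derivative_mul, derivative_pow, derivative_sub,
      derivative_X, derivative_C, Nat.cast_add, Nat.cast_one, add_tsub_cancel_right, eval_add,
      eval_mul, eval_sub, eval_pow, eval_X, eval_C, eval_zero, eval_one, eval_ofNat]
    ring
  simp only [hderiv, eval_mul, eval_pow, eval_sub, eval_X, eval_C, sub_self, zero_mul, mul_zero,
    zero_pow k.succ_ne_zero, zero_sub] at hparts
  simpa only [gegenbauerWeight, mul_left_comm] using hparts

lemma coeff_gegenbauerRaise_succ {q : ℝ[X]} (hq : q.degree < (n + 1 : ℕ)) :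
    (gegenbauerRaise a b k q).coeff (n + 1) = -(n + 2 * k + 2) * q.coeff n := by
  have hcoeff := (degree_lt_iff_coeff_zero q (n + 1)).1 hq
  have hexpand : gegenbauerRaise a b k q
      = (C (a + b) * derivative q - C (2 * (k + 1) : ℝ) * q) * X - derivative q * X * X
        + C (-(a * b)) * derivative q + C ((k + 1) * (a + b) : ℝ) * q := by
    simp only [gegenbauerRaise, map_mul, map_add, map_neg, map_ofNat]
    ring
  simp only [hexpand, coeff_add, coeff_sub, coeff_C_mul, coeff_mul_X, coeff_derivative,
    hcoeff (n + 1) le_rfl, hcoeff (n + 1 + 1) (by lia)]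
  cases n with
  | zero => simp only [mul_coeff_zero, coeff_X_zero]; push_cast; ring
  | succ n => simp only [coeff_mul_X, coeff_derivative]; push_cast; ring

lemma degree_gegenbauerRaise_lt {q : ℝ[X]} (hq : q.degree < n) :
    (gegenbauerRaise a b k q).degree < (n + 1 : ℕ) := by
  rw [degree_lt_iff_coeff_zero] at hq ⊢
  rintro (_ | m) hm
  · lia
  · rw [coeff_gegenbauerRaise_succ, hq m (by lia), mul_zero]
    exact (degree_lt_iff_coeff_zero q _).2 fun j hj => hq j (by lia)

lemma OrthogonalToDegreeLT.deriv (hab : a ≤ b)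
    (hf : ∀ t ∈ Icc a b, HasDerivWithinAt f (f' t) (Icc a b) t) (hf' : ContinuousOn f' (Icc a b))
    (ho : OrthogonalToDegreeLT a b (gegenbauerWeight a b k) n f) :
    OrthogonalToDegreeLT a b (gegenbauerWeight a b (k + 1)) (n - 1) f' := by
  intro q hq
  rw [integral_deriv_mul_eq_neg_integral_mul_gegenbauerRaise hab hf hf', neg_eq_zero]
  cases n with
  | zero =>
    have hq₀ : q = 0 := degree_eq_bot.1 (Nat.WithBot.lt_zero_iff.1 hq)
    simp [hq₀, gegenbauerRaise]
  | succ n => exact ho _ (degree_gegenbauerRaise_lt hq)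

lemma degree_derivative_lt_sub_one {g : ℝ[X]} (hg : g.degree < n) :
    (derivative g).degree < (n - 1 : ℕ) := by
  rw [degree_lt_iff_coeff_zero] at hg ⊢
  intro m hm
  rw [coeff_derivative, hg (m + 1) (by lia), zero_mul]

lemma degree_gegenbauerRaise_derivative_add_lt {e : ℝ[X]} (he : e.degree < (n + 1 : ℕ)) :
    (gegenbauerRaise a b k (derivative e) + C (n * (n + 2 * k + 1) : ℝ) * e).degree < n := by
  cases n with
  | zero =>
    rw [eq_C_of_degree_le_zero (Nat.WithBot.lt_one_iff_le_zero.1 he)]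
    simp [gegenbauerRaise]
  | succ n =>
    rw [degree_lt_iff_coeff_zero] at he ⊢
    rintro (_ | m) hm
    · lia
    rw [coeff_add, coeff_C_mul, coeff_gegenbauerRaise_succ, coeff_derivative]
    · rcases (show n ≤ m by lia).eq_or_lt with rfl | hlt
      · push_cast; ring
      · rw [he (m + 1) (by lia)]; ring
    · exact (degree_lt_iff_coeff_zero _ _).2 fun j hj => by
        rw [coeff_derivative, he (j + 1) (by lia), zero_mul]

lemma integral_derivative_sq_eq_of_orthogonal {e : ℝ[X]} (hab : a ≤ b)
    (he : e.degree < (n + 1 : ℕ))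
    (ho : OrthogonalToDegreeLT a b (gegenbauerWeight a b k) n fun t => e.eval t) :
    ∫ t in a..b, gegenbauerWeight a b (k + 1) t * (derivative e).eval t ^ 2
      = n * (n + 2 * k + 1) * ∫ t in a..b, gegenbauerWeight a b k t * e.eval t ^ 2 := by
  have hgreen := integral_deriv_mul_eq_neg_integral_mul_gegenbauerRaise (k := k) hab
    (fun t _ => (e.hasDerivAt t).hasDerivWithinAt) (derivative e).continuousOn (derivative e)
  have hlower := ho _ (degree_gegenbauerRaise_derivative_add_lt (a := a) (b := b) (k := k) he)
  have hsplit : ∫ t in a..b, gegenbauerWeight a b k t * (e.eval t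
        * (gegenbauerRaise a b k (derivative e) + C (n * (n + 2 * k + 1) : ℝ) * e).eval t)
      = (∫ t in a..b, gegenbauerWeight a b k t
          * (e.eval t * (gegenbauerRaise a b k (derivative e)).eval t))
        + n * (n + 2 * k + 1) * ∫ t in a..b, gegenbauerWeight a b k t * e.eval t ^ 2 := by
    rw [← intervalIntegral.integral_const_mul, ← intervalIntegral.integral_add]
    · exact integral_congr fun t _ => by simp only [eval_add, eval_mul, eval_C]; ring
    all_goals exact Continuous.intervalIntegrable (by fun_prop) a b
  simp only [pow_two] at hsplit ⊢
  linarith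

lemma mul_integral_eval_sq_le_integral_derivative_sq {p : ℝ[X]} (hab : a < b)
    (ho : OrthogonalToDegreeLT a b (gegenbauerWeight a b k) m fun t => p.eval t) :
    m * (m + 2 * k + 1) * ∫ t in a..b, gegenbauerWeight a b k t * p.eval t ^ 2
      ≤ ∫ t in a..b, gegenbauerWeight a b (k + 1) t * (derivative p).eval t ^ 2 := by
  have hω (j : ℕ) : ContinuousOn (gegenbauerWeight a b j) (Icc a b) := by fun_prop
  obtain ⟨n, hmn, hpn⟩ : ∃ n, m ≤ n ∧ p.degree < n := ⟨max m (p.natDegree + 1), le_max_left _ _,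
    degree_le_natDegree.trans_lt (by exact_mod_cast (le_max_right m (p.natDegree + 1)))⟩
  induction n, hmn using Nat.le_induction generalizing p with
  | base =>
    have hzero : ∫ t in a..b, gegenbauerWeight a b k t * p.eval t ^ 2 = 0 := by
      simpa only [pow_two] using ho p hpn
    rw [hzero, mul_zero]
    exact integral_weight_mul_sq_nonneg hab.le fun t ht => gegenbauerWeight_nonneg ht
  | succ n hmn ih =>
    obtain ⟨g, hgn, hgo⟩ := exists_sub_orthogonalToDegreeLT hab (hω k)
      (fun t ht => gegenbauerWeight_pos ht) p.continuousOn n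
    have hpeel : OrthogonalToDegreeLT a b (gegenbauerWeight a b k) m fun t => g.eval t := by
      simpa using ho.sub hab.le (hω k) (by fun_prop) (by fun_prop) (hgo.mono hmn)
    have hg := ih hpeel hgn
    have hderiv := hgo.deriv hab.le
      (fun t _ => ((p.hasDerivAt t).sub (g.hasDerivAt t)).hasDerivWithinAt) (by fun_prop)
    have htop := integral_derivative_sq_eq_of_orthogonal (e := p - g) hab.le
      ((degree_sub_le p g).trans_lt (max_lt hpn (hgn.trans (by exact_mod_cast n.lt_succ_self))))
      (by simpa using hgo)
    simp only [derivative_sub, eval_sub] at htop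
    rw [integral_sq_eq_integral_sq_add_integral_sub_sq hab.le (hω k) p.continuousOn hgn hgo,
      integral_sq_eq_integral_sq_add_integral_sub_sq hab.le (hω (k + 1)) (by fun_prop)
        (degree_derivative_lt_sub_one hgn) hderiv, htop, mul_add]
    gcongr
    exact integral_weight_mul_sq_nonneg hab.le fun t ht => gegenbauerWeight_nonneg ht

lemma mul_integral_sq_le_integral_deriv_sq (hab : a < b)
    (hf : ∀ t ∈ Icc a b, HasDerivWithinAt f (f' t) (Icc a b) t) (hf' : ContinuousOn f' (Icc a b))
    (ho : OrthogonalToDegreeLT a b (gegenbauerWeight a b k) m f) :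
    m * (m + 2 * k + 1) * ∫ t in a..b, gegenbauerWeight a b k t * f t ^ 2
      ≤ ∫ t in a..b, gegenbauerWeight a b (k + 1) t * f' t ^ 2 := by
  have hω (j : ℕ) : ContinuousOn (gegenbauerWeight a b j) (Icc a b) := by fun_prop
  have hω₀ (j : ℕ) (t : ℝ) (ht : t ∈ Icc a b) : 0 ≤ gegenbauerWeight a b j t :=
    gegenbauerWeight_nonneg ht
  have hfc : ContinuousOn f (Icc a b) := fun t ht => (hf t ht).continuousWithinAt
  refine le_of_forall_pos_le_add fun ε hε => ?_
  set c : ℝ := m * (m + 2 * k + 1)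
  obtain ⟨n₀, hn₀⟩ := exists_forall_integral_sub_sq_le hab.le (hω k) (hω₀ k) hfc
    (show 0 < ε / (c + 1) by positivity)
  set n := max m n₀
  obtain ⟨g, hgn, hgo⟩ := exists_sub_orthogonalToDegreeLT hab (hω k)
    (fun t ht => gegenbauerWeight_pos ht) hfc n
  have hgap : c * ∫ t in a..b, gegenbauerWeight a b k t * g.eval t ^ 2
      ≤ ∫ t in a..b, gegenbauerWeight a b (k + 1) t * (derivative g).eval t ^ 2 :=
    mul_integral_eval_sq_le_integral_derivative_sq hab (by
      simpa using ho.sub hab.le (hω k) hfc (by fun_prop) (hgo.mono (le_max_left m n₀)))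
  have henergy := integral_sq_eq_integral_sq_add_integral_sub_sq hab.le (hω (k + 1)) hf'
    (degree_derivative_lt_sub_one hgn)
    (hgo.deriv hab.le (fun t ht => (hf t ht).sub (g.hasDerivAt t).hasDerivWithinAt) (by fun_prop))
  have hrest := integral_weight_mul_sq_nonneg (f := fun t => f' t - (derivative g).eval t) hab.le
    (hω₀ (k + 1))
  have htail : c * ∫ t in a..b, gegenbauerWeight a b k t * (f t - g.eval t) ^ 2 ≤ ε := by
    calc _ ≤ c * (ε / (c + 1)) := by
          gcongr
          exact hn₀ n (le_max_right m n₀) g hgn hgo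
      _ ≤ ε := by
          rw [mul_div_assoc', div_le_iff₀ (by positivity)]
          nlinarith
  rw [integral_sq_eq_integral_sq_add_integral_sub_sq hab.le (hω k) hfc hgn hgo, mul_add]
  linarith

lemma descFactorial_succ_mul_ascFactorial_succ (m k s : ℕ) :
    m.descFactorial (s + 1) * (m + 2 * k + 1).ascFactorial (s + 1)
      = m * (m + 2 * k + 1)
        * ((m - 1).descFactorial s * (m - 1 + 2 * (k + 1) + 1).ascFactorial s) := by
  cases m with
  | zero => simp
  | succ m =>
    rw [Nat.succ_descFactorial_succ, Nat.ascFactorial_succ, ← Nat.succ_ascFactorial,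
      Nat.add_sub_cancel, show m + 2 * (k + 1) + 1 = (m + 1 + 2 * k + 1).succ by lia]
    ring

lemma integral_sub_sq_le_integral_iteratedDerivWithin_sq {g : ℝ[X]} (hab : a < b)
    (hf : ContDiffOn ℝ s f (Icc a b)) (hg : g.degree < m)
    (ho : OrthogonalToDegreeLT a b (gegenbauerWeight a b k) m fun t => f t - g.eval t) :
    m.descFactorial s * (m + 2 * k + 1).ascFactorial s
        * ∫ t in a..b, gegenbauerWeight a b k t * (f t - g.eval t) ^ 2
      ≤ ∫ t in a..b, gegenbauerWeight a b (k + s) t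
          * iteratedDerivWithin s f (Icc a b) t ^ 2 := by
  induction s generalizing m k f g with
  | zero =>
    have hpyth := integral_sq_eq_integral_sq_add_integral_sub_sq hab.le (by fun_prop)
      hf.continuousOn hg ho
    have hproj := integral_weight_mul_sq_nonneg (w := gegenbauerWeight a b k)
      (f := fun t => g.eval t) hab.le fun t ht => gegenbauerWeight_nonneg ht
    simp only [Nat.descFactorial_zero, Nat.ascFactorial_zero, Nat.cast_one, one_mul, add_zero,
      iteratedDerivWithin_zero]
    linarith
  | succ s ih =>
    have huniq := uniqueDiffOn_Icc hab
    have hf₁ : ContDiffOn ℝ 1 f (Icc a b) := hf.of_le (by simp)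
    have hf's : ContDiffOn ℝ s (derivWithin f (Icc a b)) (Icc a b) :=
      hf.derivWithin huniq (by push_cast; rfl)
    have herr (t : ℝ) (ht : t ∈ Icc a b) : HasDerivWithinAt (fun t => f t - g.eval t)
        (derivWithin f (Icc a b) t - (derivative g).eval t) (Icc a b) t :=
      (hf₁.differentiableOn one_ne_zero t ht).hasDerivWithinAt.sub (g.hasDerivAt t).hasDerivWithinAt
    have herr' : ContinuousOn (fun t => derivWithin f (Icc a b) t - (derivative g).eval t)
        (Icc a b) := hf's.continuousOn.sub (derivative g).continuousOn
    have hgap := mul_integral_sq_le_integral_deriv_sq hab herr herr' ho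
    have hrec := ih hf's (degree_derivative_lt_sub_one hg) (ho.deriv hab.le herr herr')
    rw [iteratedDerivWithin_succ', show k + (s + 1) = k + 1 + s by ring]
    refine le_trans ?_ hrec
    have hconst : (m.descFactorial (s + 1) * (m + 2 * k + 1).ascFactorial (s + 1) : ℝ)
        = m * (m + 2 * k + 1)
          * ((m - 1).descFactorial s * (m - 1 + 2 * (k + 1) + 1).ascFactorial s) := by
      exact_mod_cast descFactorial_succ_mul_ascFactorial_succ m k s
    rw [hconst, mul_comm (m * _ : ℝ), mul_assoc]
    gcongr

lemma integral_sub_sq_le_of_orthogonal_of_contDiffOn {g : ℝ[X]} (hab : a < b) (hsr : s ≤ r)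
    (hf : ContDiffOn ℝ s f (Icc a b)) (hg : g.degree < r)
    (ho : OrthogonalToDegreeLT a b (gegenbauerWeight a b 0) r fun t => f t - g.eval t) :
    ∫ t in a..b, (f t - g.eval t) ^ 2
      ≤ ((b - a) / 2) ^ (2 * s) * ((r - s).factorial / (r + s).factorial)
        * ∫ t in a..b, iteratedDerivWithin s f (Icc a b) t ^ 2 := by
  have hiter : ContinuousOn (iteratedDerivWithin s f (Icc a b)) (Icc a b) :=
    hf.continuousOn_iteratedDerivWithin le_rfl (uniqueDiffOn_Icc hab)
  have hfactorial : ((r - s).factorial : ℝ) * (r.descFactorial s * (r + 1).ascFactorial s)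
      = (r + s).factorial := by
    rw [← mul_assoc]
    exact_mod_cast (congrArg (· * _) (Nat.factorial_mul_descFactorial hsr)).trans
      (Nat.factorial_mul_ascFactorial r s)
  have herr := integral_sub_sq_le_integral_iteratedDerivWithin_sq hab hf hg ho
  have hweight : ∫ t in a..b, gegenbauerWeight a b (0 + s) t
        * iteratedDerivWithin s f (Icc a b) t ^ 2
      ≤ ((b - a) / 2) ^ (2 * s) * ∫ t in a..b, iteratedDerivWithin s f (Icc a b) t ^ 2 := by
    rw [zero_add, ← intervalIntegral.integral_const_mul]
    refine integral_mono_on hab.le ?_ ?_ fun t ht =>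
      mul_le_mul_of_nonneg_right (gegenbauerWeight_le ht) (sq_nonneg _)
    all_goals exact ContinuousOn.intervalIntegrable_of_Icc hab.le (by fun_prop)
  simp only [gegenbauerWeight_zero, one_mul, mul_zero, add_zero] at herr
  rw [mul_div_assoc', div_mul_eq_mul_div, le_div_iff₀ (by positivity), ← hfactorial]
  calc _ = (r - s).factorial * (r.descFactorial s * (r + 1).ascFactorial s
          * ∫ t in a..b, (f t - g.eval t) ^ 2) := by ring
    _ ≤ (r - s).factorial * (((b - a) / 2) ^ (2 * s)
          * ∫ t in a..b, iteratedDerivWithin s f (Icc a b) t ^ 2) :=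
        mul_le_mul_of_nonneg_left (herr.trans hweight) (Nat.cast_nonneg _)
    _ = _ := by ring

lemma OrthogonalToDegreeLT.deriv_of_right_eq_zero (hab : a ≤ b)
    (hf : ∀ t ∈ Icc a b, HasDerivWithinAt f (f' t) (Icc a b) t) (hf' : ContinuousOn f' (Icc a b))
    (hfb : f b = 0) (ho : OrthogonalToDegreeLT a b (gegenbauerWeight a b 0) n f) :
    OrthogonalToDegreeLT a b (fun t => t - a) n f' := by
  intro q hq
  have hdeg : (derivative ((X - C a) * q)).degree < n := by
    have hprod : ((X - C a) * q).degree < ((n + 1 : ℕ) : WithBot ℕ) := by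
      rw [degree_lt_iff_coeff_zero] at hq ⊢
      rintro (_ | j) hj
      · lia
      · rw [sub_mul, coeff_sub, coeff_X_mul, coeff_C_mul, hq j (by lia), hq (j + 1) (by lia)]
        ring
    simpa using degree_derivative_lt_sub_one hprod
  have hparts := integral_deriv_mul_eval hab hf hf' ((X - C a) * q)
  have horth := ho _ hdeg
  simp only [gegenbauerWeight_zero, one_mul] at horth
  simp only [horth, hfb, eval_mul, eval_sub, eval_X, eval_C, sub_self, zero_mul, mul_zero] at hparts
  simpa only [mul_left_comm] using hparts

lemma mul_integral_sub_sq_le_of_right_eq {u u' : ℝ → ℝ} {p q : ℝ[X]} (hab : a < b)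
    (hu : ∀ t ∈ Icc a b, HasDerivWithinAt u (u' t) (Icc a b) t) (hu' : ContinuousOn u' (Icc a b))
    (hp : p.natDegree ≤ r) (hpb : p.eval b = u b)
    (ho : OrthogonalToDegreeLT a b (gegenbauerWeight a b 0) r fun t => u t - p.eval t)
    (hq : q.degree < r) :
    r * (r + 1) * ∫ t in a..b, (u t - p.eval t) ^ 2
      ≤ (b - a) ^ 2 * ∫ t in a..b, (u' t - q.eval t) ^ 2 := by
  have herr (t : ℝ) (ht : t ∈ Icc a b) : HasDerivWithinAt (fun t => u t - p.eval t)
      (u' t - (derivative p).eval t) (Icc a b) t :=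
    (hu t ht).sub (p.hasDerivAt t).hasDerivWithinAt
  have herr' : ContinuousOn (fun t => u' t - (derivative p).eval t) (Icc a b) := by fun_prop
  have hp' : (derivative p).degree < r := degree_derivative_lt_sub_one (n := r + 1)
    (degree_le_natDegree.trans_lt (by exact_mod_cast Nat.lt_succ_of_le hp))
  calc r * (r + 1) * ∫ t in a..b, (u t - p.eval t) ^ 2
      ≤ ∫ t in a..b, gegenbauerWeight a b 1 t * (u' t - (derivative p).eval t) ^ 2 := by
        simpa using mul_integral_sq_le_integral_deriv_sq hab herr herr' ho
    _ ≤ ∫ t in a..b, (b - a) * ((t - a) * (u' t - (derivative p).eval t) ^ 2) := by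
        refine integral_mono_on hab.le ?_ ?_ fun t ht => ?_
        · exact ContinuousOn.intervalIntegrable_of_Icc hab.le (by fun_prop)
        · exact ContinuousOn.intervalIntegrable_of_Icc hab.le (by fun_prop)
        · have hta := sub_nonneg.2 ht.1
          rw [gegenbauerWeight, pow_one, mul_comm (t - a), mul_assoc]
          gcongr
          exact ht.1
    _ = (b - a) * ∫ t in a..b, (t - a) * (u' t - (derivative p).eval t) ^ 2 :=
        intervalIntegral.integral_const_mul _ _
    _ ≤ (b - a) * ∫ t in a..b, (t - a) * (u' t - q.eval t) ^ 2 := by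
        gcongr
        exact integral_sub_sq_le_of_orthogonal hab.le (by fun_prop) (fun t ht => sub_nonneg.2 ht.1)
          hu' hp' (ho.deriv_of_right_eq_zero hab.le herr herr' (by simp [hpb])) hq
    _ ≤ (b - a) * ∫ t in a..b, (b - a) * (u' t - q.eval t) ^ 2 := by
        gcongr
        refine integral_mono_on hab.le ?_ ?_ fun t ht => ?_
        · exact ContinuousOn.intervalIntegrable_of_Icc hab.le (by fun_prop)
        · exact ContinuousOn.intervalIntegrable_of_Icc hab.le (by fun_prop)
        · gcongr
          exact ht.2
    _ = (b - a) ^ 2 * ∫ t in a..b, (u' t - q.eval t) ^ 2 := by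
        rw [intervalIntegral.integral_const_mul, pow_two, mul_assoc]

end RadauProjection

open RadauProjection in
theorem stmt_10_general {a b : ℝ} (hab : a < b) {r s : ℕ} (hr : 1 ≤ r) (hsr : s ≤ r) {u : ℝ → ℝ}
    (hu : ContDiffOn ℝ (s + 1) u (Icc a b)) {p : Polynomial ℝ} (hp : p.natDegree ≤ r)
    (hpb : p.eval b = u b)
    (ho : ∀ q : Polynomial ℝ, q.degree < (r : WithBot ℕ) →
      ∫ t in a..b, (u t - p.eval t) * q.eval t = 0) :
    ∫ t in a..b, (u t - p.eval t) ^ 2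
      ≤ 4 * ((b - a) / 2) ^ (2 * (s + 1)) * (1 / (r : ℝ) ^ 2)
        * ((r - s).factorial / (r + s).factorial)
        * ∫ t in a..b, iteratedDerivWithin (s + 1) u (Icc a b) t ^ 2 := by
  have hu' : ContDiffOn ℝ s (derivWithin u (Icc a b)) (Icc a b) :=
    hu.derivWithin (uniqueDiffOn_Icc hab) le_rfl
  have huderiv (t : ℝ) (ht : t ∈ Icc a b) :
      HasDerivWithinAt u (derivWithin u (Icc a b) t) (Icc a b) t :=
    (hu.differentiableOn (by simp) t ht).hasDerivWithinAt
  obtain ⟨q, hq, hqo⟩ := exists_sub_orthogonalToDegreeLT hab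
    (w := gegenbauerWeight a b 0) (by fun_prop) (fun t ht => gegenbauerWeight_pos ht)
    hu'.continuousOn r
  have hradau := mul_integral_sub_sq_le_of_right_eq hab huderiv hu'.continuousOn hp hpb
    (by simpa [OrthogonalToDegreeLT] using ho) hq
  have hlegendre := integral_sub_sq_le_of_orthogonal_of_contDiffOn hab hsr hu' hq hqo
  rw [← iteratedDerivWithin_succ'] at hlegendre
  have hr₀ : (0 : ℝ) < r := by exact_mod_cast hr
  have hnonneg : 0 ≤ ∫ t in a..b, (u t - p.eval t) ^ 2 :=
    integral_nonneg hab.le fun t _ => sq_nonneg _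
  have hsq : (r : ℝ) ^ 2 * ∫ t in a..b, (u t - p.eval t) ^ 2
      ≤ (b - a) ^ 2 * (((b - a) / 2) ^ (2 * s) * ((r - s).factorial / (r + s).factorial)
        * ∫ t in a..b, iteratedDerivWithin (s + 1) u (Icc a b) t ^ 2) := by
    calc _ ≤ r * (r + 1) * ∫ t in a..b, (u t - p.eval t) ^ 2 := by gcongr; linarith
      _ ≤ _ := hradau
      _ ≤ _ := by gcongr
  rw [← le_div_iff₀' (by positivity)] at hsq
  exact hsq.trans_eq (by ring)

/-- projection error estimate, Lemma 3.1 / eq. (3.2).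
For every `s₀ ∈ ℕ` there is `C > 0`, depending only on `s₀`, such that for every
interval `(a,b)` with `Δt = b − a`, every `r ≥ 1`, every `u ∈ C^{s₀+1}([a,b])` and every
integer `0 ≤ s ≤ min(r, s₀)`,
`‖u − Π^r u‖²_{L²(a,b)} ≤ C (Δt/2)^{2(s+1)} (1/r²) ((r−s)!/(r+s)!) ‖u^{(s+1)}‖²_{L²(a,b)}`.
Here `Π^r u` is characterized as the unique polynomial `p` of degree `≤ r` with
`p b = u b` and `∫_a^b (u − p) q dt = 0` for all polynomials `q` of degree `< r`
(the transport of the reference projector on `(−1,1)` by the affine map). -/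
theorem stmt_10 (s0 : ℕ) :
    ∃ C > (0 : ℝ), ∀ a b : ℝ, a < b → ∀ r : ℕ, 1 ≤ r → ∀ u : ℝ → ℝ,
      ContDiffOn ℝ (s0 + 1) u (Set.Icc a b) →
      ∀ s : ℕ, s ≤ min r s0 →
      ∀ p : Polynomial ℝ, p.natDegree ≤ r → p.eval b = u b →
        (∀ q : Polynomial ℝ, q.degree < (r : WithBot ℕ) →
          ∫ t in a..b, (u t - p.eval t) * q.eval t = 0) →
        (∫ t in a..b, (u t - p.eval t) ^ 2)
          ≤ C * ((b - a) / 2) ^ (2 * (s + 1)) * (1 / (r : ℝ) ^ 2)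
            * (((r - s).factorial : ℝ) / ((r + s).factorial : ℝ))
            * ∫ t in a..b, (iteratedDerivWithin (s + 1) u (Set.Icc a b) t) ^ 2 :=
  ⟨4, by norm_num, fun _ _ hab _ hr _ hu _ hs _ hp hpb ho =>
    stmt_10_general hab hr (hs.trans (min_le_left _ _))
      (hu.of_le (by exact_mod_cast Nat.succ_le_succ (hs.trans (min_le_right _ _)))) hp hpb ho⟩
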